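/- arXiv:1307.2767 — 3 statements merged into one kernel-verified Lean document; each statement's English description precedes it below -/
import Mathlib

section
/- Let k ≥ 2, n ≥ 3, and m ≥ 1 be integers with k odd, 3 ∤ n, and 4 ∣ n. Then G(k,n,m)/F_n^{k+m-1} ≡ F_{n-1} (mod F_n). -/
/-- `G n m k` is the sequence from the paper: `G(1,n,m) = F_n^m`,
`G(k+1,n,m) = F_{n·G(k,n,m)}`. The value at `k = 0` is junk. -/
def G (n m : ℕ) : ℕ → ℕ
  | 0 => 1
  | 1 => Nat.fib n ^ m
  | (k+2) => Nat.fib (n * G n m (k+1))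

/-!
Write `φ ^ n = F_{n-1} + F_n φ` in `ℤ[φ]`. For an odd `p` dividing `x - y` and `p ^ j ∣ t`, the
difference `x ^ t - y ^ t` agrees with its linear part `t y ^ (t-1) (x - y)` modulo
`p ^ (j+1) (x - y)`. With `x = φ ^ n` and `y = F_{n-1}`, comparing the coefficients of `φ` gives
`F_{nt} ≡ t F_n F_{n-1} ^ (t-1) (mod p ^ (j+1) F_n)`. Taking `p = F_n`, which is odd as `3 ∤ n`, and
`t = G(k)`, the quotients `c_k = G(k) / F_n ^ (k+m-1)` satisfy
`c_{k+1} ≡ c_k F_{n-1} ^ (G(k)-1) (mod F_n)`. As `4 ∣ n`, the square of `F_{n-1}` is `1` modulo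
`F_n`, so only the parity of `G(k)` matters: `G(1)` is odd, whereas for `k ≥ 1` we have
`3 ∣ F_n ∣ G(k)`, hence `2 = F_3 ∣ G(k+1)`.
-/

section FirstOrderExpansion

variable {R : Type*} [CommRing R] {p : ℕ} {x y : R}

theorem sq_mul_sub_dvd_pow_sub_pow_sub (hp : Odd p) (h : (p : R) ∣ x - y) :
    (p : R) ^ 2 * (x - y) ∣ x ^ p - y ^ p - p * y ^ (p - 1) * (x - y) := by
  obtain ⟨b, hb⟩ := h
  obtain rfl : x = y + p * b := by linear_combination hb
  rw [← geom_sum₂_mul, ← sub_mul]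
  exact mul_dvd_mul_right (odd_sq_dvd_geom_sum₂_sub y b hp) _

theorem mul_sub_dvd_pow_sub_pow_sub (h : (p : R) ∣ x - y) (t : ℕ) :
    p * (x - y) ∣ x ^ t - y ^ t - t * y ^ (t - 1) * (x - y) := by
  have hsq : (x - y) ^ 2 ∣ x ^ t - y ^ t - t * y ^ (t - 1) * (x - y) := by
    convert sq_dvd_add_pow_sub_sub (x - y) y t using 1
    ring
  exact (sq (x - y) ▸ mul_dvd_mul_right h (x - y)).trans hsq

theorem pow_succ_mul_sub_dvd_pow_sub_pow_sub (hp : Odd p) (h : (p : R) ∣ x - y) {j t : ℕ}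
    (ht : p ^ j ∣ t) :
    (p : R) ^ (j + 1) * (x - y) ∣ x ^ t - y ^ t - t * y ^ (t - 1) * (x - y) := by
  induction j generalizing x y t with
  | zero => simpa only [zero_add, pow_one] using mul_sub_dvd_pow_sub_pow_sub h t
  | succ j ih =>
    obtain ⟨r, rfl⟩ := (dvd_pow_self p j.succ_ne_zero).trans ht
    have hr : p ^ j ∣ r := Nat.dvd_of_mul_dvd_mul_left hp.pos (by rwa [← pow_succ'])
    rcases r with _ | s
    · simp
    have hexp : p * (s + 1) - 1 = p * s + (p - 1) := by rw [mul_add_one, Nat.add_sub_assoc hp.pos]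
    have hsplit : x ^ (p * (s + 1)) - y ^ (p * (s + 1)) -
          (p * (s + 1) : ℕ) * y ^ (p * (s + 1) - 1) * (x - y) =
        ((x ^ p) ^ (s + 1) - (y ^ p) ^ (s + 1) - (s + 1 : ℕ) * (y ^ p) ^ s * (x ^ p - y ^ p)) +
          (s + 1 : ℕ) * (y ^ p) ^ s * (x ^ p - y ^ p - p * y ^ (p - 1) * (x - y)) := by
      rw [hexp, pow_add, pow_mul, pow_mul, pow_mul]
      push_cast
      ring
    have hpow : (p : R) * (x - y) ∣ x ^ p - y ^ p := by
      rw [← geom_sum₂_mul]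
      exact mul_dvd_mul_right (dvd_geom_sum₂_self h) _
    rw [hsplit]
    refine dvd_add ?_ ?_
    · calc (p : R) ^ (j + 1 + 1) * (x - y) = p ^ (j + 1) * (p * (x - y)) := by ring
        _ ∣ p ^ (j + 1) * (x ^ p - y ^ p) := mul_dvd_mul_left _ hpow
        _ ∣ _ := ih (h.trans (sub_dvd_pow_sub_pow x y p)) hr
    · have hr' : (p : R) ^ j ∣ (s + 1 : ℕ) := mod_cast Nat.cast_dvd_cast hr
      calc (p : R) ^ (j + 1 + 1) * (x - y) = p ^ j * (p ^ 2 * (x - y)) := by ring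
        _ ∣ _ := mul_dvd_mul (hr'.mul_right _) (sq_mul_sub_dvd_pow_sub_pow_sub hp h)

end FirstOrderExpansion

section Fibonacci

open Nat (fib)
open QuadraticAlgebra

/-- The ring `ℤ[φ]` of golden integers, with `φ ^ 2 = 1 + φ`; Mathlib's `ω` is `φ`, and `re` and
`im` are the coordinates in the basis `1, φ`. -/
abbrev GoldenInt : Type := QuadraticAlgebra ℤ 1 1

variable {n p j t : ℕ}

theorem GoldenInt.omega_pow (hn : n ≠ 0) : (ω : GoldenInt) ^ n = ⟨fib (n - 1), fib n⟩ := by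
  induction n, Nat.one_le_iff_ne_zero.mpr hn using Nat.le_induction with
  | base => ext <;> simp
  | succ n hn1 ih =>
    have hfib : fib (n + 1) = fib (n - 1) + fib n := Nat.fib_add_one (by lia)
    rw [pow_succ', ih (by lia), omega_mul_mk, hfib]
    simp

theorem GoldenInt.omega_pow_sub_fib (hn : n ≠ 0) :
    (ω : GoldenInt) ^ n - fib (n - 1) = fib n * (ω : GoldenInt) := by
  rw [omega_pow hn]
  ext <;> simp

theorem GoldenInt.natCast_dvd_omega_pow_sub_fib (hn : n ≠ 0) (hp : p ∣ fib n) :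
    (p : GoldenInt) ∣ (ω : GoldenInt) ^ n - fib (n - 1) := by
  rw [omega_pow_sub_fib hn]
  exact (Nat.cast_dvd_cast hp).mul_right _

theorem GoldenInt.dvd_im_of_natCast_dvd {d : ℕ} {z : GoldenInt} (h : (d : GoldenInt) ∣ z) :
    (d : ℤ) ∣ z.im := by
  obtain ⟨w, rfl⟩ := h
  exact ⟨w.im, by simp⟩

theorem pow_succ_dvd_fib_mul (hp : p ∣ fib n) (ht : p ^ j ∣ t) : p ^ (j + 1) ∣ fib (n * t) := by
  suffices p ^ (j + 1) ∣ fib (n * p ^ j) from this.trans (Nat.fib_dvd _ _ (mul_dvd_mul_left n ht))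
  rcases eq_or_ne (n * p ^ j) 0 with h0 | h0
  · simp [h0]
  have hdvd : ((p ^ (j + 1) : ℕ) : GoldenInt) ∣
      (ω : GoldenInt) ^ (n * p ^ j) - (fib (n - 1) ^ p ^ j : ℕ) := by
    rw [pow_mul]
    exact_mod_cast dvd_sub_pow_of_dvd_sub
      (GoldenInt.natCast_dvd_omega_pow_sub_fib (left_ne_zero_of_mul h0) hp) j
  have him := GoldenInt.dvd_im_of_natCast_dvd hdvd
  rw [GoldenInt.omega_pow h0, im_sub, im_natCast, sub_zero] at him
  exact Int.natCast_dvd_natCast.mp him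

theorem fib_mul_modEq (hn : n ≠ 0) (hp_odd : Odd p) (hp : p ∣ fib n) (ht : p ^ j ∣ t) :
    fib (n * t) ≡ t * fib (n - 1) ^ (t - 1) * fib n [MOD p ^ (j + 1) * fib n] := by
  rcases eq_or_ne t 0 with rfl | ht0
  · simp [Nat.ModEq]
  have hdvd : ((p ^ (j + 1) * fib n : ℕ) : GoldenInt) ∣
      (ω : GoldenInt) ^ (n * t) - (fib (n - 1) ^ t : ℕ) -
        (t * fib (n - 1) ^ (t - 1) * fib n : ℕ) * (ω : GoldenInt) := by
    have hexpand := pow_succ_mul_sub_dvd_pow_sub_pow_sub hp_odd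
      (GoldenInt.natCast_dvd_omega_pow_sub_fib hn hp) ht
    rw [GoldenInt.omega_pow_sub_fib hn, ← pow_mul, ← mul_assoc, ← mul_assoc] at hexpand
    exact_mod_cast dvd_of_mul_right_dvd hexpand
  have him := GoldenInt.dvd_im_of_natCast_dvd hdvd
  rw [GoldenInt.omega_pow (mul_ne_zero hn ht0)] at him
  simp only [im_sub, im_mul, im_natCast, re_natCast, omega_re, omega_im] at him
  refine (Nat.modEq_iff_dvd.mpr ?_).symm
  simpa using him

theorem fib_mul_div_modEq (hodd : Odd (fib n)) (ht : fib n ^ j ∣ t) :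
    fib (n * t) / fib n ^ (j + 1) ≡ t / fib n ^ j * fib (n - 1) ^ (t - 1) [MOD fib n] := by
  have hn : n ≠ 0 := by
    rintro rfl
    simp at hodd
  have hpos (i : ℕ) : 0 < fib n ^ i := pow_pos hodd.pos i
  have hmod := fib_mul_modEq hn hodd dvd_rfl ht
  obtain ⟨q, hq⟩ := pow_succ_dvd_fib_mul (dvd_refl (fib n)) ht
  obtain ⟨c, rfl⟩ := ht
  rw [hq] at hmod ⊢
  rw [Nat.mul_div_cancel_left _ (hpos _), Nat.mul_div_cancel_left _ (hpos _)]
  refine Nat.ModEq.mul_left_cancel' (hpos (j + 1)).ne' ?_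
  convert hmod using 1
  ring

theorem odd_fib_of_not_three_dvd (h3 : ¬ 3 ∣ n) : Odd (fib n) := by
  have hgcd : Nat.gcd 3 n = 1 := Nat.prime_three.coprime_iff_not_dvd.mpr h3
  have hcop : Nat.gcd (fib 3) (fib n) = 1 := by rw [← Nat.fib_gcd, hgcd, Nat.fib_one]
  exact Nat.coprime_two_left.mp hcop

theorem fib_sub_one_sq_modEq_one (hn : n ≠ 0) (heven : Even n) :
    fib (n - 1) ^ 2 ≡ 1 [MOD fib n] := by
  have hcassini : (fib (n + 1) : ℤ) * fib (n - 1) - fib n ^ 2 = 1 := by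
    have := Int.fib_succ_mul_fib_pred_sub_fib_sq n
    rwa [Int.natAbs_natCast, heven.neg_one_pow, ← Nat.cast_add_one,
      ← Nat.cast_pred (Nat.pos_of_ne_zero hn)] at this
  have hfib : (fib (n + 1) : ℤ) = fib (n - 1) + fib n := mod_cast Nat.fib_add_one hn
  refine Nat.modEq_iff_dvd.mpr ⟨fib (n - 1) - fib n, ?_⟩
  push_cast
  linear_combination -hcassini + fib (n - 1) * hfib

end Fibonacci

section PowModEq

variable {N x e : ℕ}

theorem pow_modEq_one_of_even (hx : x ^ 2 ≡ 1 [MOD N]) (he : Even e) : x ^ e ≡ 1 [MOD N] := by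
  obtain ⟨a, rfl⟩ := he.two_dvd
  simpa only [pow_mul, one_pow] using hx.pow a

theorem pow_modEq_self_of_odd (hx : x ^ 2 ≡ 1 [MOD N]) (he : Odd e) : x ^ e ≡ x [MOD N] := by
  obtain ⟨a, rfl⟩ := he
  simpa only [pow_succ, one_mul] using (pow_modEq_one_of_even hx (even_two_mul a)).mul_right x

end PowModEq

section G

open Nat (fib)

variable {n m : ℕ}

theorem fib_pow_dvd_G (n m k : ℕ) : fib n ^ (k + m) ∣ G n m (k + 1) := by
  induction k with
  | zero => rw [zero_add, G]
  | succ k ih =>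
    rw [G, show k + 1 + m = k + m + 1 by ring]
    exact pow_succ_dvd_fib_mul dvd_rfl ih

theorem G_pos (hn : n ≠ 0) (k : ℕ) : 0 < G n m (k + 1) := by
  have hpos : 0 < n := Nat.pos_of_ne_zero hn
  induction k with
  | zero => exact pow_pos (Nat.fib_pos.mpr hpos) m
  | succ k ih => exact Nat.fib_pos.mpr (Nat.mul_pos hpos ih)

theorem even_G (hm : m ≠ 0) (h4 : 4 ∣ n) (k : ℕ) : Even (G n m (k + 2)) := by
  have h3 : 3 ∣ G n m (k + 1) := calc
    3 ∣ fib n := Nat.fib_dvd 4 n h4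
    _ ∣ fib n ^ (k + m) := dvd_pow_self _ (by lia)
    _ ∣ G n m (k + 1) := fib_pow_dvd_G n m k
  exact even_iff_two_dvd.mpr (Nat.fib_dvd 3 _ (h3.mul_left n))

theorem G_div_modEq_succ (h3 : ¬ 3 ∣ n) (k : ℕ) :
    G n m (k + 2) / fib n ^ (k + m + 1) ≡
      G n m (k + 1) / fib n ^ (k + m) * fib (n - 1) ^ (G n m (k + 1) - 1) [MOD fib n] :=
  fib_mul_div_modEq (odd_fib_of_not_three_dvd h3) (fib_pow_dvd_G n m k)

theorem G_two_div_modEq_one (h3 : ¬ 3 ∣ n) (heven : Even n) :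
    G n m 2 / fib n ^ (m + 1) ≡ 1 [MOD fib n] := by
  have hodd : Odd (fib n) := odd_fib_of_not_three_dvd h3
  have hsq : fib (n - 1) ^ 2 ≡ 1 [MOD fib n] := fib_sub_one_sq_modEq_one (by lia) heven
  have hstep := G_div_modEq_succ (m := m) h3 0
  simp only [G, zero_add] at hstep ⊢
  rw [Nat.div_self (pow_pos hodd.pos m), one_mul] at hstep
  exact hstep.trans (pow_modEq_one_of_even hsq (hodd.pow.tsub_odd odd_one))

theorem G_div_modEq_succ_of_four_dvd (hm : m ≠ 0) (h3 : ¬ 3 ∣ n) (h4 : 4 ∣ n) (k : ℕ) :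
    G n m (k + 3) / fib n ^ (k + 1 + m + 1) ≡
      G n m (k + 2) / fib n ^ (k + 1 + m) * fib (n - 1) [MOD fib n] := by
  have hn : n ≠ 0 := by lia
  have hsq : fib (n - 1) ^ 2 ≡ 1 [MOD fib n] :=
    fib_sub_one_sq_modEq_one hn (Even.trans_dvd (by decide) h4)
  have hodd : Odd (G n m (k + 2) - 1) :=
    Nat.Even.sub_odd (G_pos hn (k + 1)) (even_G hm h4 k) odd_one
  exact (G_div_modEq_succ h3 (k + 1)).trans ((pow_modEq_self_of_odd hsq hodd).mul_left _)

end G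

theorem stmt_3_general (k n m : ℕ) (hk : 2 ≤ k) (hm : 1 ≤ m) (h3 : ¬ (3 ∣ n)) (h4 : 4 ∣ n) :
    G n m k / Nat.fib n ^ (k + m - 1) ≡ Nat.fib (n - 1) ^ k [MOD Nat.fib n] := by
  have heven : Even n := Even.trans_dvd (by decide) h4
  obtain ⟨i, rfl⟩ := Nat.exists_eq_add_of_le' hk
  rw [show i + 2 + m - 1 = i + m + 1 by lia]
  clear hk
  induction i with
  | zero =>
    rw [zero_add, zero_add]
    exact (G_two_div_modEq_one h3 heven).trans (fib_sub_one_sq_modEq_one (by lia) heven).symm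
  | succ i ih =>
    refine (G_div_modEq_succ_of_four_dvd (by lia) h3 h4 i).trans ?_
    rw [add_right_comm i 1 m]
    exact ih.mul_right _

theorem stmt_3 (k n m : ℕ) (hk : 2 ≤ k) (hn : 3 ≤ n) (hm : 1 ≤ m)
    (hko : Odd k) (h3 : ¬ (3 ∣ n)) (h4 : 4 ∣ n) :
    G n m k / Nat.fib n ^ (k + m - 1) ≡ Nat.fib (n - 1) [MOD Nat.fib n] :=
  (stmt_3_general k n m hk hm h3 h4).trans <| pow_modEq_self_of_odd
    (fib_sub_one_sq_modEq_one (by lia) (Even.trans_dvd (by decide) h4)) hko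
end

section
/- For every integer n ≥ 3 with 3 ∤ n, the integer F_{n·F_n}/F_n^2 satisfies F_{n·F_n}/F_n^2 ≡ 1 (mod F_n); and for every integer n ≥ 3 with 3 ∣ n, F_{n·F_n}/F_n^2 ≡ F_{n-3}/2 (mod F_n). (When 3 ∣ n, F_{n-3} is even, so F_{n-3}/2 is an integer; also F_n^2 ∣ F_{n·F_n}, so the quotient is an integer.) -/
/-!
Write `f = F_n` and `a = F_{n-1}`. Since `F_{m+n} = f F_{m+1} + a F_m`, the binomial theorem gives
`F_{kn} = ∑ i, C(k, i) f ^ i a ^ (k-i) F_i`, so `F_{nf} / f ^ 2 ≡ a ^ (f-1) + C(f, 2) a ^ (f-2)`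
modulo `f`. Cassini's identity gives `a ^ 2 ≡ (-1) ^ n`. For odd `n` the number `f` is a sum of two
coprime squares, hence `1` or `2` modulo `4`, and so `a ^ (2 ⌊(f-1)/2⌋) ≡ 1` whatever the parity
of `n`. If `f` is odd (that is, `3 ∤ n`), this is `a ^ (f-1) ≡ 1`, and `f` divides `C(f, 2)`. If `f`
is even, this is `a ^ (f-2) ≡ 1`, and `a + C(f, 2) ≡ a - f/2 = F_{n-3} / 2`.
-/

section

open Nat Finset

theorem fib_mul_succ_add_eq_sum_antidiagonal (n k r : ℕ) :
    fib (k * (n + 1) + r) = ∑ ij ∈ antidiagonal k,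
      k.choose ij.1 * (fib (n + 1) ^ ij.1 * fib n ^ ij.2 * fib (ij.1 + r)) := by
  induction k generalizing r with
  | zero => simp
  | succ k ih =>
    have fib_shift : fib ((k + 1) * (n + 1) + r) =
        fib n * fib (k * (n + 1) + r) + fib (n + 1) * fib (k * (n + 1) + (r + 1)) := by
      rw [← add_assoc, ← fib_add]
      ring_nf
    rw [fib_shift, ih, ih, mul_sum, mul_sum]
    refine Eq.trans ?_ (sum_antidiagonal_choose_succ_mul
      (fun i j ↦ fib (n + 1) ^ i * fib n ^ j * fib (i + r)) k).symm
    congr 1 <;> refine sum_congr rfl fun ij hij ↦ ?_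
    · rw [Nat.cast_id]
      ring
    · rw [Nat.cast_id, choose_symm_of_eq_add (mem_antidiagonal.1 hij).symm, add_right_comm,
        ← add_assoc]
      ring

-- For `k ≤ 1`, every exponent that is truncated to `0` comes with a coefficient that vanishes.
theorem fib_mul_succ_modEq_fib_succ_pow_three (n k : ℕ) :
    fib (k * (n + 1)) ≡ k * fib n ^ (k - 1) * fib (n + 1) +
      k.choose 2 * fib n ^ (k - 2) * fib (n + 1) ^ 2 [MOD fib (n + 1) ^ 3] := by
  match k with
  | 0 => simp [Nat.ModEq]
  | 1 => simp [Nat.ModEq]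
  | k + 2 =>
    have tail_dvd : fib (n + 1) ^ 3 ∣ ∑ i ∈ range k, (k + 2).choose (i + 3) *
        (fib (n + 1) ^ (i + 3) * fib n ^ (k + 2 - (i + 3)) * fib (i + 3)) :=
      dvd_sum fun i _ ↦ ((pow_dvd_pow _ (by lia)).mul_right _ |>.mul_right _).mul_left _
    have expansion := fib_mul_succ_add_eq_sum_antidiagonal n (k + 2) 0
    simp only [Nat.sum_antidiagonal_eq_sum_range_succ_mk, sum_range_succ', add_assoc,
      Nat.reduceAdd, add_zero] at expansion
    rw [expansion]
    refine ((modEq_zero_iff_dvd.2 tail_dvd).add_right _).trans (congrArg (· % _) ?_)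
    simp only [Nat.add_sub_cancel, Nat.add_one_sub_one, Nat.sub_zero, choose_zero_right,
      choose_one_right, fib_zero, fib_one, fib_two, pow_zero, pow_one, mul_zero, mul_one, one_mul,
      add_zero, zero_add]
    ring

theorem fib_mul_fib_div_sq_modEq (n : ℕ) :
    fib ((n + 1) * fib (n + 1)) / fib (n + 1) ^ 2 ≡
      fib n ^ (fib (n + 1) - 1) + (fib (n + 1)).choose 2 * fib n ^ (fib (n + 1) - 2)
        [MOD fib (n + 1)] := by
  have expansion : fib ((n + 1) * fib (n + 1)) ≡ fib (n + 1) ^ 2 * (fib n ^ (fib (n + 1) - 1) +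
      (fib (n + 1)).choose 2 * fib n ^ (fib (n + 1) - 2)) [MOD fib (n + 1) ^ 2 * fib (n + 1)] := by
    rw [mul_comm (n + 1), ← pow_succ]
    refine (fib_mul_succ_modEq_fib_succ_pow_three n _).trans (congrArg (· % _) ?_)
    ring
  have sq_dvd : fib (n + 1) ^ 2 ∣ fib ((n + 1) * fib (n + 1)) :=
    (expansion.dvd_iff (dvd_mul_right _ _)).2 (dvd_mul_right _ _)
  refine ModEq.mul_left_cancel' (pow_ne_zero 2 (fib_pos.2 n.succ_pos).ne') ?_
  rwa [Nat.mul_div_cancel' sq_dvd]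

theorem fib_sq_modEq_neg_one_pow (n : ℕ) :
    (fib n : ℤ) ^ 2 ≡ (-1) ^ (n + 1) [ZMOD fib (n + 1)] := by
  have cassini := Int.fib_succ_mul_fib_pred_sub_fib_sq n
  rw [← Nat.cast_succ, Int.fib_natCast, Int.fib_natCast, Int.natAbs_natCast] at cassini
  exact Int.modEq_iff_dvd.2 ⟨-Int.fib (n - 1), by rw [pow_succ, ← cassini]; ring⟩

theorem sq_add_sq_mod_four_of_coprime {x y : ℕ} (h : x.Coprime y) :
    (x ^ 2 + y ^ 2) % 4 = 1 ∨ (x ^ 2 + y ^ 2) % 4 = 2 := by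
  have not_both_even : ¬(2 ∣ x ∧ 2 ∣ y) := fun ⟨hx, hy⟩ ↦
    not_coprime_of_dvd_of_dvd one_lt_two hx hy h
  have square_mod_four (z : ℕ) : 2 ∣ z ∧ z ^ 2 % 4 = 0 ∨ ¬2 ∣ z ∧ z ^ 2 % 4 = 1 := by
    rcases Nat.even_or_odd' z with ⟨t, rfl | rfl⟩
    · exact .inl ⟨dvd_mul_right 2 t, by ring_nf; lia⟩
    · exact .inr ⟨by lia, by ring_nf; lia⟩
  have := square_mod_four x
  have := square_mod_four y
  lia

theorem fib_mod_four_of_odd {n : ℕ} (hn : Odd n) : fib n % 4 = 1 ∨ fib n % 4 = 2 := by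
  obtain ⟨m, rfl⟩ := hn
  rw [fib_two_mul_add_one]
  exact sq_add_sq_mod_four_of_coprime (fib_coprime_fib_succ m).symm

theorem fib_pow_two_mul_half_pred_modEq_one (n : ℕ) :
    fib n ^ (2 * ((fib (n + 1) - 1) / 2)) ≡ 1 [MOD fib (n + 1)] := by
  have exponent_even : Even ((n + 1) * ((fib (n + 1) - 1) / 2)) := by
    rcases Nat.even_or_odd (n + 1) with even | odd
    · exact even.mul_right _
    · have := fib_mod_four_of_odd odd
      exact (Nat.even_iff.2 (by lia)).mul_left _
  rw [← Int.natCast_modEq_iff, Nat.cast_pow, Nat.cast_one, pow_mul,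
    ← exponent_even.neg_one_pow (α := ℤ), pow_mul (-1 : ℤ)]
  exact (fib_sq_modEq_neg_one_pow n).pow _

theorem fib_dvd_fib_iff {m n : ℕ} (hm : 3 ≤ m) : fib m ∣ fib n ↔ m ∣ n := by
  refine ⟨fun fib_dvd_fib ↦ ?_, fib_dvd m n⟩
  have fib_gcd_eq : fib (m.gcd n) = fib m := by
    rw [fib_gcd, Nat.gcd_eq_left fib_dvd_fib]
  by_contra not_dvd
  have gcd_lt : m.gcd n < m :=
    (Nat.gcd_le_left n (by lia)).lt_of_ne fun h ↦ not_dvd (Nat.gcd_eq_left_iff_dvd.1 h)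
  have fib_gcd_lt : fib (m.gcd n) < fib m := calc
    fib (m.gcd n) ≤ fib (m - 1) := fib_mono (by lia)
    _ < fib (m - 1 + 1) := fib_lt_fib_succ (by lia)
    _ = fib m := by rw [Nat.sub_add_cancel (by lia)]
  exact fib_gcd_lt.ne fib_gcd_eq

theorem even_fib_iff {n : ℕ} : Even (fib n) ↔ 3 ∣ n :=
  even_iff_two_dvd.trans (fib_dvd_fib_iff le_rfl)

theorem dvd_choose_two_of_odd {m : ℕ} (hm : Odd m) : m ∣ m.choose 2 := by
  obtain ⟨g, rfl⟩ := hm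
  exact ⟨g, by rw [choose_two_right, Nat.add_sub_cancel, Nat.mul_div_assoc _ (dvd_mul_right 2 g),
    Nat.mul_div_cancel_left _ two_pos]⟩

theorem half_add_choose_two_modEq_zero_of_even {m : ℕ} (hm : Even m) :
    m / 2 + m.choose 2 ≡ 0 [MOD m] := by
  obtain ⟨g, rfl⟩ := hm.two_dvd
  rw [choose_two_right, mul_assoc, Nat.mul_div_cancel_left _ two_pos,
    Nat.mul_div_cancel_left _ two_pos, ← mul_one_add, modEq_zero_iff_dvd]
  rcases g.eq_zero_or_pos with rfl | g_pos
  · simp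
  · exact ⟨g, by rw [Nat.add_sub_cancel' (by lia)]; ring⟩

theorem fib_mul_fib_div_sq_modEq_one {n : ℕ} (hf : Odd (fib (n + 1))) :
    fib ((n + 1) * fib (n + 1)) / fib (n + 1) ^ 2 ≡ 1 [MOD fib (n + 1)] := by
  have fib_pow : fib n ^ (fib (n + 1) - 1) ≡ 1 [MOD fib (n + 1)] := by
    have := fib_pow_two_mul_half_pred_modEq_one n
    rwa [Nat.two_mul_div_two_of_even (hf.tsub_odd odd_one)] at this
  have choose_term := modEq_zero_iff_dvd.2
    ((dvd_choose_two_of_odd hf).mul_right (fib n ^ (fib (n + 1) - 2)))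
  exact (fib_mul_fib_div_sq_modEq n).trans (fib_pow.add choose_term)

theorem fib_mul_fib_div_sq_modEq_fib_add_choose_two {n : ℕ} (hf : Even (fib (n + 1))) :
    fib ((n + 1) * fib (n + 1)) / fib (n + 1) ^ 2 ≡
      fib n + (fib (n + 1)).choose 2 [MOD fib (n + 1)] := by
  have := hf.two_dvd
  have : 0 < fib (n + 1) := fib_pos.2 n.succ_pos
  have fib_pow : fib n ^ (fib (n + 1) - 2) ≡ 1 [MOD fib (n + 1)] := by
    have exponent : fib (n + 1) - 2 = 2 * ((fib (n + 1) - 1) / 2) := by lia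
    rw [exponent]
    exact fib_pow_two_mul_half_pred_modEq_one n
  have factored : fib n ^ (fib (n + 1) - 1) = fib n * fib n ^ (fib (n + 1) - 2) := by
    rw [← _root_.pow_succ']
    congr 1
    lia
  have quotient := fib_mul_fib_div_sq_modEq n
  rw [factored, ← add_mul] at quotient
  simpa only [mul_one] using quotient.trans (fib_pow.mul_left _)

theorem fib_mul_fib_div_sq_modEq_half_fib {n : ℕ} (hf : Even (fib (n + 3))) :
    fib ((n + 3) * fib (n + 3)) / fib (n + 3) ^ 2 ≡ fib n / 2 [MOD fib (n + 3)] := by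
  have fib_pred : fib (n + 2) = fib n / 2 + fib (n + 3) / 2 := by
    have := hf.two_dvd
    have : fib (n + 3) = fib (n + 1) + fib (n + 2) := fib_add_two
    have : fib (n + 2) = fib n + fib (n + 1) := fib_add_two
    lia
  refine (fib_mul_fib_div_sq_modEq_fib_add_choose_two hf).trans ?_
  rw [fib_pred, add_assoc (fib n / 2)]
  exact (half_add_choose_two_modEq_zero_of_even hf).add_left _

end

theorem stmt_7 (n : ℕ) (hn : 3 ≤ n) :
    (¬ (3 ∣ n) →
      Nat.fib (n * Nat.fib n) / Nat.fib n ^ 2 ≡ 1 [MOD Nat.fib n]) ∧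
    (3 ∣ n →
      Nat.fib (n * Nat.fib n) / Nat.fib n ^ 2 ≡ Nat.fib (n - 3) / 2 [MOD Nat.fib n]) := by
  obtain ⟨m, rfl⟩ := Nat.exists_eq_add_of_le' hn
  rw [← even_fib_iff, Nat.not_even_iff_odd]
  exact ⟨fib_mul_fib_div_sq_modEq_one, fib_mul_fib_div_sq_modEq_half_fib⟩
end

section
/- For all positive integers n and k, F_n^{k+1} divides F_{n·F_n^k}. -/
/-!
Since `F_m ∣ F_{mr}`, the addition formula for `F_{mr + m}` read modulo `F_m ^ 2` gives
`F_{m(r+1)} ≡ (r + 1) F_m F_{m+1} ^ r`. Hence if `d ∣ F_m`, multiplying the index `m` by `d` gains a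
factor `d`; start from `m = n`, `d = F_n` and iterate `k` times.
-/

/-- `F_{m+n} = F_m F_{n-1} + F_{m+1} F_n` with `F_{n-1} = F_{n+1} - F_n`, the subtraction moved to the
left so that the identity holds in `ℕ`, also for `n = 0`. -/
theorem fib_add_add_mul_fib (m n : ℕ) :
    Nat.fib (m + n) + Nat.fib m * Nat.fib n =
      Nat.fib m * Nat.fib (n + 1) + Nat.fib (m + 1) * Nat.fib n := by
  cases n with
  | zero => simp
  | succ n =>
    rw [← add_assoc, Nat.fib_add, Nat.fib_add_two]
    ring

theorem fib_mul_add_one_modEq (m r : ℕ) :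
    Nat.fib (m * r + 1) ≡ Nat.fib (m + 1) ^ r [MOD Nat.fib m] := by
  induction r with
  | zero => rfl
  | succ r ih =>
    calc Nat.fib (m * (r + 1) + 1)
        = Nat.fib (m * r) * Nat.fib m + Nat.fib (m * r + 1) * Nat.fib (m + 1) := by
          rw [mul_add_one, Nat.fib_add]
      _ ≡ Nat.fib (m * r + 1) * Nat.fib (m + 1) [MOD Nat.fib m] := by simp [Nat.ModEq]
      _ ≡ Nat.fib (m + 1) ^ r * Nat.fib (m + 1) [MOD Nat.fib m] := ih.mul_right _
      _ = Nat.fib (m + 1) ^ (r + 1) := (pow_succ _ _).symm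

theorem fib_mul_add_self_modEq (m r : ℕ) :
    Nat.fib (m * r + m) ≡
      Nat.fib (m * r) * Nat.fib (m + 1) + Nat.fib (m + 1) ^ r * Nat.fib m
      [MOD Nat.fib m ^ 2] := by
  have fib_sq_dvd : Nat.fib m ^ 2 ∣ Nat.fib (m * r) * Nat.fib m := by
    rw [sq]
    exact mul_dvd_mul_right (Nat.fib_dvd _ _ (dvd_mul_right m r)) _
  calc Nat.fib (m * r + m)
      ≡ Nat.fib (m * r + m) + Nat.fib (m * r) * Nat.fib m [MOD Nat.fib m ^ 2] :=
        (Nat.ModEq.refl _).add (Nat.modEq_zero_iff_dvd.2 fib_sq_dvd).symm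
    _ = Nat.fib (m * r) * Nat.fib (m + 1) + Nat.fib (m * r + 1) * Nat.fib m :=
        fib_add_add_mul_fib _ _
    _ ≡ Nat.fib (m * r) * Nat.fib (m + 1) + Nat.fib (m + 1) ^ r * Nat.fib m
        [MOD Nat.fib m ^ 2] := by
        rw [sq]
        exact ((fib_mul_add_one_modEq m r).mul_right' _).add_left _

theorem fib_mul_succ_modEq (m r : ℕ) :
    Nat.fib (m * (r + 1)) ≡ (r + 1) * Nat.fib m * Nat.fib (m + 1) ^ r [MOD Nat.fib m ^ 2] := by
  induction r with
  | zero => simp [Nat.ModEq.refl]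
  | succ r ih =>
    calc Nat.fib (m * (r + 1 + 1))
        = Nat.fib (m * (r + 1) + m) := by rw [mul_add_one m (r + 1)]
      _ ≡ Nat.fib (m * (r + 1)) * Nat.fib (m + 1) + Nat.fib (m + 1) ^ (r + 1) * Nat.fib m
          [MOD Nat.fib m ^ 2] := fib_mul_add_self_modEq m (r + 1)
      _ ≡ (r + 1) * Nat.fib m * Nat.fib (m + 1) ^ r * Nat.fib (m + 1) +
            Nat.fib (m + 1) ^ (r + 1) * Nat.fib m [MOD Nat.fib m ^ 2] :=
          (ih.mul_right _).add_right _
      _ = (r + 1 + 1) * Nat.fib m * Nat.fib (m + 1) ^ (r + 1) := by ring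

theorem mul_fib_dvd_fib_mul {d m : ℕ} (hd : d ∣ Nat.fib m) :
    d * Nat.fib m ∣ Nat.fib (m * d) := by
  cases d with
  | zero => simp
  | succ r =>
    have dvd_fib_sq : (r + 1) * Nat.fib m ∣ Nat.fib m ^ 2 := by
      rw [sq]
      exact mul_dvd_mul_right hd _
    exact ((fib_mul_succ_modEq m r).dvd_iff dvd_fib_sq).2 (dvd_mul_right _ _)

theorem pow_mul_fib_dvd_fib_mul_pow {d m : ℕ} (hd : d ∣ Nat.fib m) (k : ℕ) :
    d ^ k * Nat.fib m ∣ Nat.fib (m * d ^ k) := by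
  induction k with
  | zero => simp
  | succ k ih =>
    have hd' : d ∣ Nat.fib (m * d ^ k) := hd.trans (Nat.fib_dvd _ _ (dvd_mul_right m _))
    calc d ^ (k + 1) * Nat.fib m
        = d * (d ^ k * Nat.fib m) := by ring
      _ ∣ d * Nat.fib (m * d ^ k) := mul_dvd_mul_left d ih
      _ ∣ Nat.fib (m * d ^ k * d) := mul_fib_dvd_fib_mul hd'
      _ = Nat.fib (m * d ^ (k + 1)) := by rw [mul_assoc, pow_succ]

theorem stmt_10 (n k : ℕ) (hn : 1 ≤ n) (hk : 1 ≤ k) :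
    Nat.fib n ^ (k + 1) ∣ Nat.fib (n * Nat.fib n ^ k) := by
  rw [pow_succ]
  exact pow_mul_fib_dvd_fib_mul_pow dvd_rfl k
end
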